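/- Let P be a coordinate-replacement kernel on X = S^N with P-invariant set Ω, μ uniform on X, π = μ(·|Ω), and a good set G ⊆ Ω with π(G) > 0. Assume: (i) there is A < ∞ such that Ent_μ(F²) ≤ A·E_P^μ(F,F) for every nonnegative F supported in G; (ii) there are t_* ≥ 0, an integer L ≥ 1, and η ≥ 0 such that, uniformly in x ∈ Ω and integers s ≥ t_*, the discrete-time chain started at x satisfies P_x(∃ u ∈ {0,…,L} : X_{s+u} ∉ G) ≤ η. Set t_conf = 2A·log(e + log|Ω|), ζ = P(Poisson(t_conf) > L), and R = e^{−t_conf/A}·log|Ω| + A·π(G^c)/π(G). Then for every x ∈ Ω and every integer s ≥ t_*: ‖δ_x P^s e^{t_conf(P−I)} − π‖_TV ≤ 2(η+ζ) + sqrt(R/2) + π(G^c). Moreover, if 2(η+ζ) + sqrt(R/2) + π(G^c) + P(Poisson(2t_*) < t_*) ≤ 1/4, then the continuous-time chain e^{t(P−I)} satisfies t_mix(1/4) ≤ 2t_* + t_conf. -/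

import Mathlib

open Finset

noncomputable section

/-- `Ent_ρ(g) = ρ(g log g) − ρ(g) log ρ(g)`. -/
def ent {E : Type*} [Fintype E] (ρ g : E → ℝ) : ℝ :=
  (∑ x, ρ x * g x * Real.log (g x)) - (∑ x, ρ x * g x) * Real.log (∑ x, ρ x * g x)

/-- Dirichlet form `E_K^ρ(f,f) = (1/2) Σ_{x,y} ρ(x) K(x,y) (f(x)−f(y))²`. -/
def dirichlet {E : Type*} [Fintype E] (ρ : E → ℝ) (K : E → E → ℝ) (f : E → ℝ) : ℝ :=
  (1 / 2) * ∑ x, ∑ y, ρ x * K x y * (f x - f y) ^ 2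

/-- The uniform weight on a finite type. -/
def unif (E : Type*) [Fintype E] : E → ℝ := fun _ => (Fintype.card E : ℝ)⁻¹

/-- Total variation distance between two densities on a finite set. -/
def tvDist {X : Type*} [Fintype X] (f g : X → ℝ) : ℝ := (1 / 2) * ∑ x, |f x - g x|

/-- The kernel `P` killed on exiting `G`. -/
def killed {X : Type*} [Fintype X] [DecidableEq X] (P : Matrix X X ℝ) (G : Finset X) :
    Matrix X X ℝ :=
  fun x y => if x ∈ G ∧ y ∈ G then P x y else 0

/-- The density at `z` of `δ_x P^s e^{t(P−I)}` (Poissonization of the number of jumps). -/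
def burnThenHeat {X : Type*} [Fintype X] [DecidableEq X] (P : Matrix X X ℝ) (s : ℕ)
    (t : ℝ) (x z : X) : ℝ :=
  ∑' j : ℕ, Real.exp (-t) * t ^ j / (Nat.factorial j) * ((P ^ (s + j)) x z)

/-!
Kill the chain when it leaves `G`, and let `k` be the density of its law at time `t` after the
burn-in. By the sojourn estimate and Poissonization `k` keeps all but a mass `η + ζ`. The relative
entropy of `k` with respect to the uniform measure on `G` of the same mass, whose density is the
mean `q` of `k` over `G`, is at most `log |Ω|` at time `0`; it is dissipated at least at the rate
`dirichlet 1 P (√k)`, except for a term produced by the killing. That term is at most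
`k (1 - log (k / q)) ≤ q` at each site, weighted by the probability of leaving `G`, and by symmetry
of `P` these probabilities sum to at most `|Ω \ G|`. The local logarithmic Sobolev inequality and
Grönwall's inequality then bound the entropy by `R`, and Pinsker's inequality turns this into a
bound on the total variation distance. For the mixing time, the number of jumps made up to time `u`
is a Poisson variable independent of what follows, hence a random burn-in.
-/

open Matrix Topology
open InformationTheory (klFun klFun_apply klFun_nonneg)

section Pinsker

lemma hasDerivAt_log_sub_rational {x : ℝ} (hx : 0 < x) :
    HasDerivAt (fun x : ℝ ↦ Real.log x - (x - 1) * (5 * x + 1) / (2 * x * (x + 2)))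
      ((x - 1) ^ 3 / (x ^ 2 * (x + 2) ^ 2)) x := by
  have hnum : HasDerivAt (fun x : ℝ ↦ (x - 1) * (5 * x + 1))
      (1 * (5 * x + 1) + (x - 1) * (5 * 1)) x :=
    ((hasDerivAt_id x).sub_const 1).mul (((hasDerivAt_id x).const_mul 5).add_const 1)
  have hden : HasDerivAt (fun x : ℝ ↦ 2 * x * (x + 2)) (2 * 1 * (x + 2) + 2 * x * 1) x :=
    ((hasDerivAt_id x).const_mul 2).mul ((hasDerivAt_id x).add_const 2)
  refine ((Real.hasDerivAt_log hx.ne').sub (hnum.div hden (by positivity))).congr_deriv ?_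
  field_simp
  ring

/-- The inequality `three_mul_sq_sub_one_le_klFun` below, solved for `Real.log x`. -/
lemma rational_le_log {x : ℝ} (hx : 0 < x) :
    (x - 1) * (5 * x + 1) / (2 * x * (x + 2)) ≤ Real.log x := by
  set f := fun x : ℝ ↦ Real.log x - (x - 1) * (5 * x + 1) / (2 * x * (x + 2)) with hf
  have hf' {y : ℝ} (hy : 0 < y) : HasDerivAt f _ y := hasDerivAt_log_sub_rational hy
  suffices f 1 ≤ f x by simpa [hf] using this
  rcases le_total 1 x with h | h
  · refine monotoneOn_of_hasDerivWithinAt_nonneg (convex_Ici 1)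
      (fun y hy ↦ (hf' (one_pos.trans_le hy)).continuousAt.continuousWithinAt)
      (fun y hy ↦ (hf' (one_pos.trans_le (interior_subset hy))).hasDerivWithinAt)
      (fun y hy ↦ ?_) Set.self_mem_Ici h h
    have : 0 ≤ y - 1 := sub_nonneg.2 (interior_subset hy)
    positivity
  · refine antitoneOn_of_hasDerivWithinAt_nonpos (convex_Ioc 0 1)
      (fun y hy ↦ (hf' hy.1).continuousAt.continuousWithinAt)
      (fun y hy ↦ (hf' (interior_subset hy).1).hasDerivWithinAt)
      (fun y hy ↦ ?_) ⟨hx, h⟩ ⟨one_pos, le_rfl⟩ h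
    have : y - 1 ≤ 0 := sub_nonpos.2 (interior_subset hy).2
    exact div_nonpos_of_nonpos_of_nonneg (Odd.pow_nonpos (by decide) this) (by positivity)

lemma three_mul_sq_sub_one_le_klFun {x : ℝ} (hx : 0 ≤ x) :
    3 * (x - 1) ^ 2 ≤ (2 * x + 4) * klFun x := by
  rcases hx.eq_or_lt with rfl | hx
  · norm_num [klFun_apply]
  have h := rational_le_log hx
  rw [div_le_iff₀ (by positivity)] at h
  rw [klFun_apply]
  linarith

lemma mul_klFun_div {k q : ℝ} (hq : 0 < q) :
    q * klFun (k / q) = k * (Real.log k - Real.log q) - k + q := by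
  rcases eq_or_ne k 0 with rfl | hk
  · simp [klFun_apply]
  · rw [klFun_apply, Real.log_div hk hq.ne']
    field_simp
    ring

lemma three_mul_sq_sub_le_klFun {k q : ℝ} (hk : 0 ≤ k) (hq : 0 < q) :
    3 * (k - q) ^ 2 ≤ (2 * k + 4 * q) * (q * klFun (k / q)) := by
  calc 3 * (k - q) ^ 2 = q ^ 2 * (3 * (k / q - 1) ^ 2) := by field_simp
    _ ≤ q ^ 2 * ((2 * (k / q) + 4) * klFun (k / q)) := by
        exact mul_le_mul_of_nonneg_left (three_mul_sq_sub_one_le_klFun (by positivity))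
          (sq_nonneg q)
    _ = (2 * k + 4 * q) * (q * klFun (k / q)) := by field_simp

lemma sq_sum_abs_sub_le_sum_klFun {ι : Type*} {s : Finset ι} {k q : ι → ℝ}
    (hk : ∀ i ∈ s, 0 ≤ k i) (hq : ∀ i ∈ s, 0 < q i) :
    (∑ i ∈ s, |k i - q i|) ^ 2 ≤
      (∑ i ∈ s, (2 * k i + 4 * q i) / 3) * ∑ i ∈ s, q i * klFun (k i / q i) := by
  refine sum_sq_le_sum_mul_sum_of_sq_le_mul s (fun i hi ↦ ?_) (fun i hi ↦ ?_) fun i hi ↦ ?_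
  · linarith [hk i hi, hq i hi]
  · exact mul_nonneg (hq i hi).le (klFun_nonneg (div_nonneg (hk i hi) (hq i hi).le))
  · rw [sq_abs]
    linarith [three_mul_sq_sub_le_klFun (hk i hi) (hq i hi)]

end Pinsker

section TotalVariation

/-- The density of the uniform distribution on `s`. -/
def unifOn {X : Type*} [DecidableEq X] (s : Finset X) : X → ℝ :=
  fun x ↦ if x ∈ s then (s.card : ℝ)⁻¹ else 0

lemma unifOn_nonneg {X : Type*} [DecidableEq X] (s : Finset X) (x : X) : 0 ≤ unifOn s x := by
  unfold unifOn
  positivity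

variable {X : Type*} [Fintype X]

lemma tvDist_nonneg (f g : X → ℝ) : 0 ≤ tvDist f g := by
  unfold tvDist
  positivity

lemma tvDist_comm (f g : X → ℝ) : tvDist f g = tvDist g f := by
  simp only [tvDist, abs_sub_comm]

lemma tvDist_triangle (f g h : X → ℝ) : tvDist f h ≤ tvDist f g + tvDist g h := by
  simp only [tvDist, ← mul_add, ← sum_add_distrib]
  gcongr
  exact abs_sub_le _ _ _

lemma tvDist_eq_of_le {f g : X → ℝ} (h : ∀ x, g x ≤ f x) :
    tvDist f g = (∑ x, f x - ∑ x, g x) / 2 := by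
  simp only [tvDist, abs_of_nonneg (sub_nonneg.2 (h _)), sum_sub_distrib]
  ring

lemma tvDist_le_one {f g : X → ℝ} (hf : ∀ x, 0 ≤ f x) (hg : ∀ x, 0 ≤ g x)
    (hf1 : ∑ x, f x = 1) (hg1 : ∑ x, g x = 1) : tvDist f g ≤ 1 := by
  have hle : ∑ x, |f x - g x| ≤ ∑ x, (f x + g x) :=
    sum_le_sum fun x _ ↦ (abs_sub _ _).trans_eq <| by
      rw [abs_of_nonneg (hf x), abs_of_nonneg (hg x)]
  rw [sum_add_distrib, hf1, hg1] at hle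
  unfold tvDist
  linarith

lemma tvDist_le_of_hasSum {w : ℕ → ℝ} {b : ℕ → X → ℝ} {f g : X → ℝ} {T : ℝ}
    (hw : ∀ i, 0 ≤ w i) (hw1 : HasSum w 1) (hf : HasSum (fun i ↦ w i • b i) f)
    (hT : HasSum (fun i ↦ w i * tvDist (b i) g) T) : tvDist f g ≤ T := by
  have hdiff : HasSum (fun i ↦ w i • (b i - g)) (f - g) := by
    simpa only [smul_sub, one_smul] using hf.sub (hw1.smul_const g)
  have hpart (s : Finset ℕ) :
      tvDist (∑ i ∈ s, w i • (b i - g)) 0 ≤ ∑ i ∈ s, w i * tvDist (b i) g := by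
    calc tvDist (∑ i ∈ s, w i • (b i - g)) 0
        ≤ 1 / 2 * ∑ x, ∑ i ∈ s, w i * |b i x - g x| := by
          simp only [tvDist, Finset.sum_apply, Pi.smul_apply, Pi.sub_apply, Pi.zero_apply,
            sub_zero, smul_eq_mul]
          gcongr with x
          exact (abs_sum_le_sum_abs _ _).trans_eq
            (sum_congr rfl fun i _ ↦ by rw [abs_mul, abs_of_nonneg (hw i)])
      _ = ∑ i ∈ s, w i * tvDist (b i) g := by
          rw [sum_comm]
          simp only [tvDist, mul_sum, mul_left_comm]
  have hcont : Continuous fun h : X → ℝ ↦ tvDist h 0 := by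
    unfold tvDist
    fun_prop
  simpa [tvDist] using le_of_tendsto_of_tendsto' ((hcont.tendsto _).comp hdiff) hT hpart

variable [DecidableEq X]

lemma sum_unifOn {s : Finset X} (hs : s.Nonempty) : ∑ x, unifOn s x = 1 := by
  have : (s.card : ℝ) ≠ 0 := by exact_mod_cast hs.card_ne_zero
  simp [unifOn, this]

lemma tvDist_smul_unifOn {s : Finset X} (hs : s.Nonempty) {m : ℝ} (hm : m ≤ 1) :
    tvDist (m • unifOn s) (unifOn s) = (1 - m) / 2 := by
  rw [tvDist_comm, tvDist_eq_of_le (g := m • unifOn s) fun x ↦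
    mul_le_of_le_one_left (unifOn_nonneg s x) hm]
  simp only [Pi.smul_apply, smul_eq_mul, ← mul_sum, sum_unifOn hs, mul_one]

lemma tvDist_unifOn_of_subset {s t : Finset X} (hs : s.Nonempty) (hst : s ⊆ t) :
    tvDist (unifOn s) (unifOn t) = ((t.card : ℝ) - s.card) / t.card := by
  have habs (x : X) : |unifOn s x - unifOn t x| =
      unifOn s x - unifOn t x + 2 * if x ∈ t \ s then (t.card : ℝ)⁻¹ else 0 := by
    by_cases hxs : x ∈ s
    · have hinv : (t.card : ℝ)⁻¹ ≤ (s.card : ℝ)⁻¹ :=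
        inv_anti₀ (by exact_mod_cast hs.card_pos) (by exact_mod_cast card_le_card hst)
      simp [unifOn, hxs, hst hxs, hinv]
    · by_cases hxt : x ∈ t
      · simp only [unifOn, hxs, hxt, mem_sdiff, not_false_eq_true, and_true, if_true, if_false,
          zero_sub, abs_neg, abs_inv, Nat.abs_cast]
        ring
      · simp [unifOn, hxs, hxt]
  simp only [tvDist, habs, sum_add_distrib, sum_sub_distrib, sum_unifOn hs,
    sum_unifOn (hs.mono hst), ← mul_sum, sum_ite_mem, univ_inter, sum_const, nsmul_eq_mul,
    card_sdiff_of_subset hst, Nat.cast_sub (card_le_card hst)]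
  ring

end TotalVariation

section Poisson

/-- The probability that a Poisson variable of mean `t` equals `j`. The mean is a real number, not
an element of `ℝ≥0`, so that `t` can be differentiated in. -/
def poissonWeight (t : ℝ) (j : ℕ) : ℝ := Real.exp (-t) * t ^ j / j.factorial

/-- The probability that a Poisson variable of mean `t` satisfies `p`. -/
def poissonProb (t : ℝ) (p : ℕ → Prop) [DecidablePred p] : ℝ :=
  ∑' j, if p j then poissonWeight t j else 0

variable {t : ℝ}

lemma poissonWeight_nonneg (ht : 0 ≤ t) (j : ℕ) : 0 ≤ poissonWeight t j := by
  unfold poissonWeight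
  positivity

lemma poissonWeight_pos (ht : 0 < t) (j : ℕ) : 0 < poissonWeight t j := by
  unfold poissonWeight
  positivity

lemma hasSum_poissonWeight (t : ℝ) : HasSum (poissonWeight t) 1 := by
  have h := (NormedSpace.expSeries_div_hasSum_exp t).mul_left (Real.exp (-t))
  rw [← Real.exp_eq_exp_ℝ, ← Real.exp_add, neg_add_cancel, Real.exp_zero] at h
  exact h.congr_fun fun j ↦ mul_div_assoc ..

variable {p : ℕ → Prop} [DecidablePred p]

lemma poissonProb_nonneg (ht : 0 ≤ t) : 0 ≤ poissonProb t p :=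
  tsum_nonneg fun j ↦ by
    split_ifs
    exacts [poissonWeight_nonneg ht j, le_rfl]

lemma le_add_poissonProb_of_hasSum {a : ℕ → ℝ} {m b : ℝ} (ht : 0 ≤ t)
    (ha : ∀ j, a j ≤ b + if p j then 1 else 0)
    (hm : HasSum (fun j ↦ poissonWeight t j * a j) m) : m ≤ b + poissonProb t p := by
  have hp : HasSum (fun j ↦ if p j then poissonWeight t j else 0) (poissonProb t p) :=
    ((hasSum_poissonWeight t).summable.of_nonneg_of_le
      (fun j ↦ by split_ifs; exacts [poissonWeight_nonneg ht j, le_rfl])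
      (fun j ↦ by split_ifs; exacts [le_rfl, poissonWeight_nonneg ht j])).hasSum
  rw [← one_mul b]
  refine hasSum_le (fun j ↦ ?_) hm (((hasSum_poissonWeight t).mul_right b).add hp)
  calc poissonWeight t j * a j
      ≤ poissonWeight t j * (b + if p j then 1 else 0) :=
        mul_le_mul_of_nonneg_left (ha j) (poissonWeight_nonneg ht j)
    _ = poissonWeight t j * b + if p j then poissonWeight t j else 0 := by
        rw [mul_add, mul_ite, mul_one, mul_zero]

end Poisson

section Heat

open scoped Matrix.Norms.Operator

variable {X : Type*} [Fintype X] [DecidableEq X]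

/-- The heat semigroup `exp (t (Q - 1))` of the continuous-time chain that jumps at rate one
according to the kernel `Q`. -/
def heat (Q : Matrix X X ℝ) (t : ℝ) : Matrix X X ℝ := NormedSpace.exp (t • (Q - 1))

lemma heat_zero (Q : Matrix X X ℝ) : heat Q 0 = 1 := by
  rw [heat, zero_smul, NormedSpace.exp_zero]

lemma heat_add (Q : Matrix X X ℝ) (s t : ℝ) : heat Q (s + t) = heat Q s * heat Q t := by
  rw [heat, add_smul]
  exact Matrix.exp_add_of_commute _ _ (((Commute.refl _).smul_left s).smul_right t)

lemma hasSum_heat (Q : Matrix X X ℝ) (t : ℝ) :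
    HasSum (fun j ↦ poissonWeight t j • Q ^ j) (heat Q t) := by
  have hsplit : heat Q t = Real.exp (-t) • NormedSpace.exp (t • Q) := by
    have hscalar : NormedSpace.exp (-(t • (1 : Matrix X X ℝ))) = Real.exp (-t) • 1 := by
      rw [Real.exp_eq_exp_ℝ, ← neg_smul, ← Algebra.algebraMap_eq_smul_one,
        ← Algebra.algebraMap_eq_smul_one]
      exact (NormedSpace.algebraMap_exp_comm _).symm
    rw [heat, smul_sub, sub_eq_add_neg,
      Matrix.exp_add_of_commute _ _ ((Commute.one_right _).smul_right t).neg_right, hscalar,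
      mul_smul_comm, mul_one]
  rw [hsplit]
  refine ((NormedSpace.exp_series_hasSum_exp' (𝕂 := ℝ) (t • Q)).const_smul _).congr_fun ?_
  intro j
  rw [smul_pow, smul_smul, smul_smul, poissonWeight, div_eq_inv_mul]
  ring_nf

lemma hasDerivAt_heat (Q : Matrix X X ℝ) (t : ℝ) :
    HasDerivAt (heat Q) (heat Q t * (Q - 1)) t :=
  hasDerivAt_exp_smul_const (Q - 1) t

lemma hasSum_vecMul_heat (ν : X → ℝ) (Q : Matrix X X ℝ) (t : ℝ) :
    HasSum (fun j ↦ poissonWeight t j • ν ᵥ* Q ^ j) (ν ᵥ* heat Q t) := by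
  have h := (Matrix.vecMulBilin ℝ ℝ ν).toContinuousLinearMap.hasSum (hasSum_heat Q t)
  exact h.congr_fun fun j ↦ (Matrix.vecMul_smul ..).symm

lemma hasDerivAt_vecMul_heat (ν : X → ℝ) (Q : Matrix X X ℝ) (t : ℝ) :
    HasDerivAt (fun t ↦ ν ᵥ* heat Q t) ((ν ᵥ* heat Q t) ᵥ* (Q - 1)) t := by
  rw [Matrix.vecMul_vecMul]
  exact (Matrix.vecMulBilin ℝ ℝ ν).toContinuousLinearMap.hasFDerivAt.comp_hasDerivAt t
    (hasDerivAt_heat Q t)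

lemma burnThenHeat_eq_vecMul_heat (P : Matrix X X ℝ) (s : ℕ) (t : ℝ) (x : X) :
    burnThenHeat P s t x = (P ^ s) x ᵥ* heat P t := by
  funext z
  have h := (Pi.hasSum.1 (hasSum_vecMul_heat ((P ^ s) x) P t) z).tsum_eq
  rw [← h]
  exact tsum_congr fun j ↦ by rw [pow_add, Matrix.mul_apply_eq_vecMul]; rfl

end Heat

section Substochastic

variable {X : Type*} [Fintype X] {Q P : Matrix X X ℝ} {μ ν : X → ℝ} {t : ℝ}

lemma vecMul_nonneg (hν : 0 ≤ ν) (hQ : ∀ x y, 0 ≤ Q x y) : 0 ≤ ν ᵥ* Q :=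
  fun y ↦ sum_nonneg fun x _ ↦ mul_nonneg (hν x) (hQ x y)

lemma vecMul_le_vecMul (hν : 0 ≤ ν) (hνμ : ν ≤ μ) (hQ : ∀ x y, 0 ≤ Q x y)
    (hQP : ∀ x y, Q x y ≤ P x y) : ν ᵥ* Q ≤ μ ᵥ* P :=
  fun y ↦ sum_le_sum fun x _ ↦ mul_le_mul (hνμ x) (hQP x y) (hQ x y) ((hν x).trans (hνμ x))

lemma sum_vecMul_apply (ν : X → ℝ) (Q : Matrix X X ℝ) :
    ∑ y, (ν ᵥ* Q) y = ∑ x, ν x * ∑ y, Q x y := by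
  simp only [Matrix.vecMul, dotProduct, mul_sum]
  exact sum_comm

/-- A matrix with nonnegative entries and row sums at most one: the transition kernel of a Markov
chain that may be killed. -/
structure IsSubstochastic (Q : Matrix X X ℝ) : Prop where
  nonneg : ∀ x y, 0 ≤ Q x y
  sum_row_le_one : ∀ x, ∑ y, Q x y ≤ 1

lemma IsSubstochastic.sum_vecMul_le (hQ : IsSubstochastic Q) (hν : 0 ≤ ν) :
    ∑ y, (ν ᵥ* Q) y ≤ ∑ x, ν x := by
  rw [sum_vecMul_apply]
  exact sum_le_sum fun x _ ↦ mul_le_of_le_one_right (hν x) (hQ.sum_row_le_one x)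

variable [DecidableEq X]

lemma vecMul_pow_nonneg (hν : 0 ≤ ν) (hQ : ∀ x y, 0 ≤ Q x y) (j : ℕ) : 0 ≤ ν ᵥ* Q ^ j := by
  induction j with
  | zero => simpa using hν
  | succ j ih =>
    rw [pow_succ, ← Matrix.vecMul_vecMul]
    exact vecMul_nonneg ih hQ

lemma vecMul_pow_le_vecMul_pow (hν : 0 ≤ ν) (hνμ : ν ≤ μ) (hQ : ∀ x y, 0 ≤ Q x y)
    (hQP : ∀ x y, Q x y ≤ P x y) (j : ℕ) : ν ᵥ* Q ^ j ≤ μ ᵥ* P ^ j := by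
  induction j with
  | zero => simpa using hνμ
  | succ j ih =>
    rw [pow_succ, pow_succ, ← Matrix.vecMul_vecMul, ← Matrix.vecMul_vecMul]
    exact vecMul_le_vecMul (vecMul_pow_nonneg hν hQ j) ih hQ hQP

lemma vecMul_heat_nonneg (hν : 0 ≤ ν) (hQ : ∀ x y, 0 ≤ Q x y) (ht : 0 ≤ t) :
    0 ≤ ν ᵥ* heat Q t :=
  (hasSum_vecMul_heat ν Q t).nonneg fun j ↦
    smul_nonneg (poissonWeight_nonneg ht j) (vecMul_pow_nonneg hν hQ j)

lemma vecMul_heat_le_vecMul_heat (hν : 0 ≤ ν) (hνμ : ν ≤ μ) (hQ : ∀ x y, 0 ≤ Q x y)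
    (hQP : ∀ x y, Q x y ≤ P x y) (ht : 0 ≤ t) : ν ᵥ* heat Q t ≤ μ ᵥ* heat P t :=
  hasSum_le (fun j ↦ smul_le_smul_of_nonneg_left (vecMul_pow_le_vecMul_pow hν hνμ hQ hQP j)
    (poissonWeight_nonneg ht j)) (hasSum_vecMul_heat ν Q t) (hasSum_vecMul_heat μ P t)

lemma hasSum_sum_vecMul_heat (ν : X → ℝ) (Q : Matrix X X ℝ) (t : ℝ) :
    HasSum (fun j ↦ poissonWeight t j * ∑ z, (ν ᵥ* Q ^ j) z) (∑ z, (ν ᵥ* heat Q t) z) := by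
  have h := hasSum_sum fun z (_ : z ∈ univ) ↦ Pi.hasSum.1 (hasSum_vecMul_heat ν Q t) z
  simpa only [Pi.smul_apply, smul_eq_mul, ← mul_sum] using h

lemma sum_vecMul_of_mem_rowStochastic (hP : P ∈ rowStochastic ℝ X) (ν : X → ℝ) :
    ∑ z, (ν ᵥ* P) z = ∑ x, ν x := by
  simp only [sum_vecMul_apply, sum_row_of_mem_rowStochastic hP, mul_one]

lemma sum_vecMul_heat_of_mem_rowStochastic (hP : P ∈ rowStochastic ℝ X) (ν : X → ℝ) (t : ℝ) :
    ∑ z, (ν ᵥ* heat P t) z = ∑ x, ν x := by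
  refine (hasSum_sum_vecMul_heat ν P t).unique ?_
  simpa only [sum_vecMul_of_mem_rowStochastic (pow_mem hP _), one_mul] using
    (hasSum_poissonWeight t).mul_right (∑ x, ν x)

namespace IsSubstochastic

lemma antitone_sum_vecMul_pow (hQ : IsSubstochastic Q) (hν : 0 ≤ ν) :
    Antitone fun j : ℕ ↦ ∑ z, (ν ᵥ* Q ^ j) z :=
  antitone_nat_of_succ_le fun j ↦ by
    rw [pow_succ, ← Matrix.vecMul_vecMul]
    exact hQ.sum_vecMul_le (vecMul_pow_nonneg hν hQ.nonneg j)

lemma sum_vecMul_pow_le (hQ : IsSubstochastic Q) (hν : 0 ≤ ν) (j : ℕ) :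
    ∑ z, (ν ᵥ* Q ^ j) z ≤ ∑ x, ν x := by
  simpa using hQ.antitone_sum_vecMul_pow hν j.zero_le

lemma sum_vecMul_heat_le (hQ : IsSubstochastic Q) (hν : 0 ≤ ν) (ht : 0 ≤ t) :
    ∑ z, (ν ᵥ* heat Q t) z ≤ ∑ x, ν x := by
  rw [← one_mul (∑ x, ν x)]
  exact hasSum_le (fun j ↦ mul_le_mul_of_nonneg_left (hQ.sum_vecMul_pow_le hν j)
    (poissonWeight_nonneg ht j)) (hasSum_sum_vecMul_heat ν Q t)
    ((hasSum_poissonWeight t).mul_right _)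

lemma one_sub_sum_vecMul_heat_le (hQ : IsSubstochastic Q) (hν : 0 ≤ ν) (hν1 : ∑ x, ν x ≤ 1)
    (ht : 0 ≤ t) {L : ℕ} {η : ℝ} (hη : 1 - ∑ z, (ν ᵥ* Q ^ L) z ≤ η) :
    1 - ∑ z, (ν ᵥ* heat Q t) z ≤ η + poissonProb t (L < ·) := by
  have hsum := (hasSum_poissonWeight t).sub (hasSum_sum_vecMul_heat ν Q t)
  simp only [← mul_one_sub] at hsum
  refine le_add_poissonProb_of_hasSum ht (fun j ↦ ?_) hsum
  split_ifs with hj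
  · have hmass : 0 ≤ ∑ z, (ν ᵥ* Q ^ j) z :=
      sum_nonneg fun z _ ↦ vecMul_pow_nonneg hν hQ.nonneg j z
    linarith [hQ.sum_vecMul_pow_le hν L]
  · linarith [hQ.antitone_sum_vecMul_pow hν (not_lt.1 hj)]

end IsSubstochastic

lemma vecMul_heat_apply_eq_zero_of_pos (hν : 0 ≤ ν) (hQ : ∀ x y, 0 ≤ Q x y) (ht : 0 < t) {z : X}
    (hz : (ν ᵥ* heat Q t) z = 0) (s : ℝ) : (ν ᵥ* heat Q s) z = 0 := by
  have hterms : (fun j ↦ poissonWeight t j * (ν ᵥ* Q ^ j) z) = 0 :=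
    (hasSum_zero_iff_of_nonneg fun j ↦
      mul_nonneg (poissonWeight_nonneg ht.le j) (vecMul_pow_nonneg hν hQ j z)).1
      (hz ▸ Pi.hasSum.1 (hasSum_vecMul_heat ν Q t) z)
  have hpow (j : ℕ) : (ν ᵥ* Q ^ j) z = 0 :=
    (mul_eq_zero.1 (congrFun hterms j)).resolve_left (poissonWeight_pos ht j).ne'
  refine (Pi.hasSum.1 (hasSum_vecMul_heat ν Q s) z).unique ?_
  simpa only [Pi.smul_apply, hpow, smul_zero] using hasSum_zero

/-- The flow charges `z` at all positive times or at none, so where it vanishes so does its time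
derivative, which is then the nonnegative sum `((ν ᵥ* heat Q t) ᵥ* Q) z`. -/
lemma vecMul_heat_mul_eq_zero_of_pos (hν : 0 ≤ ν) (hQ : ∀ x y, 0 ≤ Q x y) (ht : 0 < t) {z : X}
    (hz : (ν ᵥ* heat Q t) z = 0) (y : X) : (ν ᵥ* heat Q t) y * Q y z = 0 := by
  have hconst : (fun s ↦ (ν ᵥ* heat Q s) z) = fun _ ↦ 0 :=
    funext (vecMul_heat_apply_eq_zero_of_pos hν hQ ht hz)
  have hderiv : ((ν ᵥ* heat Q t) ᵥ* (Q - 1)) z = 0 :=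
    (hasDerivAt_pi.1 (hasDerivAt_vecMul_heat ν Q t) z).unique (hconst ▸ hasDerivAt_const t 0)
  rw [Matrix.vecMul_sub, Matrix.vecMul_one, Pi.sub_apply, hz, sub_zero] at hderiv
  exact (sum_eq_zero_iff_of_nonneg fun x _ ↦
    mul_nonneg (vecMul_heat_nonneg hν hQ ht.le x) (hQ x z)).1 hderiv y (mem_univ y)

end Substochastic

section Killed

variable {X : Type*} [Fintype X] [DecidableEq X] {P : Matrix X X ℝ} {G : Finset X}

lemma killed_nonneg (hP : ∀ x y, 0 ≤ P x y) (x y : X) : 0 ≤ killed P G x y := by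
  unfold killed
  split_ifs
  exacts [hP x y, le_rfl]

lemma killed_le (hP : ∀ x y, 0 ≤ P x y) (x y : X) : killed P G x y ≤ P x y := by
  unfold killed
  split_ifs
  exacts [le_rfl, hP x y]

lemma killed_apply_of_notMem_left {x : X} (hx : x ∉ G) (y : X) : killed P G x y = 0 :=
  if_neg fun h ↦ hx h.1

lemma killed_apply_of_notMem_right {y : X} (hy : y ∉ G) (x : X) : killed P G x y = 0 :=
  if_neg fun h ↦ hy h.2

lemma killed_isSymm (hP : P.IsSymm) : (killed P G).IsSymm :=
  Matrix.IsSymm.ext fun x y ↦ by simp only [killed, and_comm, hP.apply]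

lemma killed_isSubstochastic (hP : P ∈ rowStochastic ℝ X) : IsSubstochastic (killed P G) where
  nonneg := killed_nonneg hP.1
  sum_row_le_one x := (sum_le_sum fun y _ ↦ killed_le hP.1 x y).trans_eq
    (sum_row_of_mem_rowStochastic hP x)

lemma indicator_vecMul_killed_pow (μ : X → ℝ) {L : ℕ} (hL : 1 ≤ L) :
    (G : Set X).indicator μ ᵥ* killed P G ^ L = μ ᵥ* killed P G ^ L := by
  obtain ⟨j, rfl⟩ := Nat.exists_eq_add_of_le' hL
  rw [pow_succ', ← Matrix.vecMul_vecMul, ← Matrix.vecMul_vecMul]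
  congr 1
  funext y
  refine sum_congr rfl fun x _ ↦ ?_
  by_cases hx : x ∈ G
  · rw [Set.indicator_of_mem (mem_coe.2 hx)]
  · have hxy : killed P G x y = 0 := killed_apply_of_notMem_left hx y
    exact (mul_eq_zero_of_right _ hxy).trans (mul_eq_zero_of_right _ hxy).symm

lemma vecMul_heat_killed_apply_of_notMem {ν : X → ℝ} (hν : ∀ x ∉ G, ν x = 0) (t : ℝ) {z : X}
    (hz : z ∉ G) : (ν ᵥ* heat (killed P G) t) z = 0 := by
  have hpow (j : ℕ) : (ν ᵥ* killed P G ^ j) z = 0 := by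
    cases j with
    | zero => simpa using hν z hz
    | succ j =>
      rw [pow_succ, ← Matrix.vecMul_vecMul]
      exact sum_eq_zero fun x _ ↦ mul_eq_zero_of_right _ (killed_apply_of_notMem_right hz x)
  refine (Pi.hasSum.1 (hasSum_vecMul_heat ν (killed P G) t) z).unique ?_
  simpa only [Pi.smul_apply, hpow, smul_zero] using hasSum_zero

end Killed

section RelativeEntropy

variable {X : Type*} [Fintype X] {G : Finset X} {k : X → ℝ}

/-- The relative entropy of the finite measure `k` with respect to the uniform measure on `G` of
the same total mass `m = ∑ x, k x`, that is, `m` times the Kullback-Leibler divergence of `k / m`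
from the uniform distribution on `G`. -/
def uniformRelEntropy (G : Finset X) (k : X → ℝ) : ℝ :=
  ∑ x, k x * Real.log (k x) - (∑ x, k x) * (Real.log (∑ x, k x) - Real.log G.card)

lemma uniformRelEntropy_eq_sum_klFun (hsupp : ∀ x ∉ G, k x = 0) (hm : 0 < ∑ x, k x) :
    uniformRelEntropy G k = ∑ x ∈ G, (∑ x, k x) / G.card *
      klFun (k x / ((∑ x, k x) / G.card)) := by
  have hG : G.Nonempty := by
    refine nonempty_iff_ne_empty.2 ?_
    rintro rfl
    exact hm.ne' (sum_eq_zero fun x _ ↦ hsupp x (notMem_empty x))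
  have hG0 : (0 : ℝ) < G.card := by exact_mod_cast hG.card_pos
  have hsum {f : X → ℝ} (hf : ∀ x ∉ G, f x = 0) : ∑ x ∈ G, f x = ∑ x, f x :=
    sum_subset (subset_univ G) fun x _ ↦ hf x
  simp only [mul_klFun_div (div_pos hm hG0), mul_sub, sum_add_distrib, sum_sub_distrib, ← sum_mul,
    hsum hsupp, hsum fun x hx ↦ mul_eq_zero_of_left (hsupp x hx) _, sum_const, nsmul_eq_mul]
  rw [uniformRelEntropy, Real.log_div hm.ne' hG0.ne', mul_div_cancel₀ _ hG0.ne']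
  ring

lemma tvDist_smul_unifOn_sum_le_sqrt [DecidableEq X] (hG : G.Nonempty) (hk : 0 ≤ k)
    (hsupp : ∀ x ∉ G, k x = 0) :
    tvDist k ((∑ x, k x) • unifOn G) ≤ √((∑ x, k x) * uniformRelEntropy G k / 2) := by
  rcases (sum_nonneg fun x _ ↦ hk x : 0 ≤ ∑ x, k x).eq_or_lt with hm | hm
  · have hk0 (x : X) : k x = 0 :=
      (sum_eq_zero_iff_of_nonneg fun x _ ↦ hk x).1 hm.symm x (mem_univ x)
    simp [tvDist, hk0]
  have hG0 : (0 : ℝ) < G.card := by exact_mod_cast hG.card_pos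
  have htv : tvDist k ((∑ x, k x) • unifOn G) = 1 / 2 * ∑ x ∈ G, |k x - (∑ x, k x) / G.card| := by
    rw [tvDist, ← sum_subset (subset_univ G) fun x _ hx ↦ by simp [unifOn, hx, hsupp x hx]]
    exact congrArg _ (sum_congr rfl fun x hx ↦ by simp [unifOn, hx, div_eq_mul_inv])
  have hmass : ∑ x ∈ G, (2 * k x + 4 * ((∑ x, k x) / G.card)) / 3 = 2 * ∑ x, k x := by
    rw [← sum_div, sum_add_distrib, ← mul_sum, sum_subset (subset_univ G) fun x _ ↦ hsupp x,
      sum_const, nsmul_eq_mul, mul_left_comm, mul_div_cancel₀ _ hG0.ne']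
    ring
  have hpinsker := sq_sum_abs_sub_le_sum_klFun (s := G) (fun x _ ↦ hk x)
    fun _ _ ↦ div_pos hm hG0
  rw [hmass, ← uniformRelEntropy_eq_sum_klFun hsupp hm] at hpinsker
  refine Real.le_sqrt_of_sq_le ?_
  rw [htv, mul_pow]
  linarith

lemma uniformRelEntropy_le_mul_log_card (hk : 0 ≤ k) :
    uniformRelEntropy G k ≤ (∑ x, k x) * Real.log G.card := by
  have hlog : ∑ x, k x * Real.log (k x) ≤ (∑ x, k x) * Real.log (∑ x, k x) := by
    rw [sum_mul]
    refine sum_le_sum fun x _ ↦ ?_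
    rcases (hk x).eq_or_lt with hx | hx
    · simp [← hx]
    · exact mul_le_mul_of_nonneg_left
        (Real.log_le_log hx (single_le_sum (fun y _ ↦ hk y) (mem_univ x))) hx.le
  rw [uniformRelEntropy]
  linarith

lemma continuous_uniformRelEntropy (G : Finset X) : Continuous (uniformRelEntropy G) := by
  have h : uniformRelEntropy G = fun k ↦ ∑ x, k x * Real.log (k x) -
      ((∑ x, k x) * Real.log (∑ x, k x) - (∑ x, k x) * Real.log G.card) := by
    funext k
    rw [uniformRelEntropy, mul_sub]
  rw [h]
  exact (continuous_finsetSum _ fun x _ ↦ Real.continuous_mul_log.comp (continuous_apply x)).sub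
    ((Real.continuous_mul_log.comp (by fun_prop)).sub (by fun_prop))

/-- At a zero of `f` the formula holds because `f' = 0` and `Real.log 0 = 0`. -/
lemma hasDerivAt_mul_log_of_eventually_zero {f : ℝ → ℝ} {f' t : ℝ} (hf : HasDerivAt f f' t)
    (h0 : f t = 0 → ∀ᶠ s in 𝓝 t, f s = 0) :
    HasDerivAt (fun s ↦ f s * Real.log (f s)) (f' * Real.log (f t) + f') t := by
  by_cases hft : f t = 0
  · have hconst : f =ᶠ[𝓝 t] fun _ ↦ 0 := h0 hft
    have hf' : f' = 0 := hf.unique ((hasDerivAt_const t 0).congr_of_eventuallyEq hconst)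
    rw [hf', zero_mul, add_zero]
    exact (hasDerivAt_const t 0).congr_of_eventuallyEq (hconst.mono fun s hs ↦ by simp [hs])
  · refine (hf.mul (hf.log hft)).congr_deriv ?_
    rw [mul_div_cancel₀ _ hft]

/-- The derivative of `uniformRelEntropy G` at `k` in the direction `k'`; the two terms `∑ x, k' x`
produced by `(a log a)' = a' log a + a'` cancel. -/
def uniformRelEntropyDeriv (G : Finset X) (k k' : X → ℝ) : ℝ :=
  ∑ x, k' x * Real.log (k x) - (∑ x, k' x) * (Real.log (∑ x, k x) - Real.log G.card)

lemma hasDerivAt_uniformRelEntropy {k : ℝ → X → ℝ} {k' : X → ℝ} {t : ℝ} (hk : 0 ≤ k t)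
    (hderiv : HasDerivAt k k' t) (h0 : ∀ x, k t x = 0 → ∀ᶠ s in 𝓝 t, k s x = 0) :
    HasDerivAt (fun s ↦ uniformRelEntropy G (k s)) (uniformRelEntropyDeriv G (k t) k') t := by
  have hx (x : X) : HasDerivAt (fun s ↦ k s x) (k' x) t := hasDerivAt_pi.1 hderiv x
  have hmass : HasDerivAt (fun s ↦ ∑ x, k s x) (∑ x, k' x) t := HasDerivAt.fun_sum fun x _ ↦ hx x
  have hmass0 (hm : ∑ x, k t x = 0) : ∀ᶠ s in 𝓝 t, ∑ x, k s x = 0 := by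
    have hall := Filter.eventually_all.2 fun x ↦
      h0 x ((sum_eq_zero_iff_of_nonneg fun x _ ↦ hk x).1 hm x (mem_univ x))
    exact hall.mono fun s hs ↦ sum_eq_zero fun x _ ↦ hs x
  have hterms := HasDerivAt.fun_sum fun x (_ : x ∈ univ) ↦
    hasDerivAt_mul_log_of_eventually_zero (hx x) (h0 x)
  have htotal := hterms.sub ((hasDerivAt_mul_log_of_eventually_zero hmass hmass0).sub
    (hmass.mul_const (Real.log G.card)))
  refine (htotal.congr_deriv ?_).congr_of_eventuallyEq (.of_forall fun s ↦ ?_)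
  · rw [uniformRelEntropyDeriv, sum_add_distrib]
    ring
  · simp only [uniformRelEntropy, mul_sub, Pi.sub_apply]

end RelativeEntropy

section LogSobolev

variable {X : Type*} [Fintype X] {P : Matrix X X ℝ} {G : Finset X} {A : ℝ} {k : X → ℝ}

/-- The logarithmic Sobolev inequality with constant `A` for nonnegative functions supported in
`G`, with respect to the uniform measure. -/
def LocalLogSobolev (P : Matrix X X ℝ) (G : Finset X) (A : ℝ) : Prop :=
  ∀ F : X → ℝ, (∀ x, 0 ≤ F x) → (∀ x, F x ≠ 0 → x ∈ G) →
    ent (unif X) (fun x ↦ F x ^ 2) ≤ A * dirichlet (unif X) P F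

lemma ent_unif [Nonempty X] (k : X → ℝ) :
    ent (unif X) k = (Fintype.card X : ℝ)⁻¹ * uniformRelEntropy univ k := by
  have hX : (Fintype.card X : ℝ)⁻¹ ≠ 0 := by simp
  simp only [ent, unif, uniformRelEntropy, mul_assoc, ← mul_sum, card_univ]
  rcases eq_or_ne (∑ x, k x) 0 with hm | hm
  · simp [hm]
  · rw [Real.log_mul hX hm, Real.log_inv]
    ring

lemma dirichlet_unif (P : Matrix X X ℝ) (f : X → ℝ) :
    dirichlet (unif X) P f = (Fintype.card X : ℝ)⁻¹ * dirichlet 1 P f := by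
  simp only [dirichlet, unif, Pi.one_apply, one_mul, mul_assoc, ← mul_sum]
  ring

lemma uniformRelEntropy_mono {G G' : Finset X} (hG : G.Nonempty) (hGG' : G ⊆ G') (hk : 0 ≤ k) :
    uniformRelEntropy G k ≤ uniformRelEntropy G' k := by
  have hlog : Real.log G.card ≤ Real.log G'.card :=
    Real.log_le_log (by exact_mod_cast hG.card_pos) (by exact_mod_cast card_le_card hGG')
  have hm : 0 ≤ ∑ x, k x := sum_nonneg fun x _ ↦ hk x
  unfold uniformRelEntropy
  gcongr

lemma LocalLogSobolev.uniformRelEntropy_le_dirichlet (hls : LocalLogSobolev P G A) (hG : G.Nonempty)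
    (hk : 0 ≤ k) (hsupp : ∀ x ∉ G, k x = 0) :
    uniformRelEntropy G k ≤ A * dirichlet 1 P fun x ↦ √(k x) := by
  have : Nonempty X := hG.to_subtype.map (↑)
  have hent := hls (fun x ↦ √(k x)) (fun x ↦ Real.sqrt_nonneg _) fun x ↦
    not_imp_comm.1 fun hx ↦ by rw [hsupp x hx, Real.sqrt_zero]
  simp only [Real.sq_sqrt (hk _)] at hent
  rw [ent_unif, dirichlet_unif, mul_left_comm, mul_le_mul_iff_right₀ (by positivity)] at hent
  exact (uniformRelEntropy_mono hG (subset_univ G) hk).trans hent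

end LogSobolev

section Dissipation

lemma sq_sqrt_sub_sqrt_le {a b : ℝ} (ha : 0 < a) (hb : 0 < b) :
    (√a - √b) ^ 2 ≤ (a - b) * (Real.log a - Real.log b) := by
  wlog hba : b ≤ a generalizing a b
  · linarith [this hb ha (le_of_not_ge hba)]
  have hlog : (a - b) / a ≤ Real.log a - Real.log b := by
    have h := Real.one_sub_inv_le_log_of_pos (div_pos ha hb)
    rwa [Real.log_div ha.ne' hb.ne', inv_div, one_sub_div ha.ne'] at h
  have hfactor : a - b = (√a - √b) * (√a + √b) := by
    linarith [Real.mul_self_sqrt ha.le, Real.mul_self_sqrt hb.le]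
  calc (√a - √b) ^ 2 = (√a - √b) ^ 2 * √a ^ 2 / a := by
        rw [Real.sq_sqrt ha.le, mul_div_cancel_right₀ _ ha.ne']
    _ ≤ (√a - √b) ^ 2 * (√a + √b) ^ 2 / a := by
        gcongr
        exact le_add_of_nonneg_right (Real.sqrt_nonneg b)
    _ = (a - b) * ((a - b) / a) := by rw [hfactor]; ring
    _ ≤ (a - b) * (Real.log a - Real.log b) :=
        mul_le_mul_of_nonneg_left hlog (sub_nonneg.2 hba)

lemma mul_one_sub_log_sub_log_le {k q : ℝ} (hk : 0 ≤ k) (hq : 0 < q) :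
    k * (1 - (Real.log k - Real.log q)) ≤ q := by
  have h := mul_nonneg hq.le (klFun_nonneg (div_nonneg hk hq.le))
  rw [mul_klFun_div hq] at h
  linarith

variable {X : Type*} [Fintype X] {Q P : Matrix X X ℝ} {Ω G : Finset X} {k f : X → ℝ}

/-- The probability that the chain with substochastic kernel `Q` is killed when it jumps from
`x`. -/
def killRate (Q : Matrix X X ℝ) (x : X) : ℝ := 1 - ∑ y, Q x y

lemma IsSubstochastic.killRate_nonneg (hQ : IsSubstochastic Q) (x : X) : 0 ≤ killRate Q x :=
  sub_nonneg.2 (hQ.sum_row_le_one x)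

lemma sum_sum_mul_sub_mul (hQ : Q.IsSymm) (f g : X → ℝ) :
    ∑ x, ∑ y, Q x y * (f y - f x) * g x =
      -(1 / 2 * ∑ x, ∑ y, Q x y * ((f x - f y) * (g x - g y))) := by
  have hswap : ∑ x, ∑ y, Q x y * (f y - f x) * g x = ∑ x, ∑ y, Q x y * (f x - f y) * g y := by
    rw [sum_comm]
    exact sum_congr rfl fun x _ ↦ sum_congr rfl fun y _ ↦ by rw [hQ.apply]
  have hadd : ∑ x, ∑ y, Q x y * (f y - f x) * g x + ∑ x, ∑ y, Q x y * (f x - f y) * g y =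
      -∑ x, ∑ y, Q x y * ((f x - f y) * (g x - g y)) := by
    simp only [← sum_add_distrib, ← sum_neg_distrib]
    exact sum_congr rfl fun x _ ↦ sum_congr rfl fun y _ ↦ by ring
  linarith

lemma dirichlet_sqrt_le (hQ : Q.IsSymm) (hQ0 : ∀ x y, 0 ≤ Q x y) (hk : 0 ≤ k)
    (h0 : ∀ x, k x = 0 → ∀ y, k y * Q y x = 0) :
    dirichlet 1 Q (fun x ↦ √(k x)) ≤
      1 / 2 * ∑ x, ∑ y, Q x y * ((k x - k y) * (Real.log (k x) - Real.log (k y))) := by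
  have hedge {x y : X} (hx : k x = 0) : Q x y = 0 ∨ k y = 0 := by
    rw [hQ.apply]
    exact (mul_eq_zero.1 (h0 x hx y)).symm
  simp only [dirichlet, Pi.one_apply, one_mul]
  refine mul_le_mul_of_nonneg_left (sum_le_sum fun x _ ↦ sum_le_sum fun y _ ↦ ?_) (by norm_num)
  rcases (hk x).eq_or_lt with hx | hx
  · rcases hedge (y := y) hx.symm with h | h
    · rw [h, zero_mul, zero_mul]
    · simp [h, show k x = 0 from hx.symm]
  rcases (hk y).eq_or_lt with hy | hy
  · rcases hedge (y := x) hy.symm with h | h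
    · rw [← hQ.apply, h, zero_mul, zero_mul]
    · exact absurd h hx.ne'
  · exact mul_le_mul_of_nonneg_left (sq_sqrt_sub_sqrt_le hx hy) (hQ0 x y)

variable [DecidableEq X]

lemma vecMul_sub_one_apply (hQ : Q.IsSymm) (k : X → ℝ) (x : X) :
    (k ᵥ* (Q - 1)) x = ∑ y, Q x y * (k y - k x) - killRate Q x * k x := by
  have hvec : (k ᵥ* Q) x = ∑ y, Q x y * k y :=
    sum_congr rfl fun y _ ↦ (mul_comm _ _).trans (by rw [hQ.apply])
  rw [Matrix.vecMul_sub, Matrix.vecMul_one, Pi.sub_apply, hvec, killRate]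
  simp only [mul_sub, sum_sub_distrib, ← sum_mul]
  ring

lemma sum_vecMul_sub_one_mul (hQ : Q.IsSymm) (k g : X → ℝ) :
    ∑ x, (k ᵥ* (Q - 1)) x * g x =
      -(1 / 2 * ∑ x, ∑ y, Q x y * ((k x - k y) * (g x - g y))) -
        ∑ x, killRate Q x * k x * g x := by
  simp only [vecMul_sub_one_apply hQ, sub_mul, sum_mul, sum_sub_distrib, sum_sum_mul_sub_mul hQ]

lemma sum_vecMul_sub_one (Q : Matrix X X ℝ) (k : X → ℝ) :
    ∑ x, (k ᵥ* (Q - 1)) x = -∑ x, killRate Q x * k x := by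
  simp only [Matrix.vecMul_sub, Matrix.vecMul_one, Pi.sub_apply, sum_sub_distrib,
    sum_vecMul_apply, killRate, sub_mul, one_mul, mul_comm (k _)]
  ring

lemma dirichlet_one_add_sum_killRate (hQ : Q.IsSymm) (f : X → ℝ) :
    dirichlet 1 Q f + ∑ x, killRate Q x * f x ^ 2 = -∑ x, (f ᵥ* (Q - 1)) x * f x := by
  rw [sum_vecMul_sub_one_mul hQ]
  simp only [dirichlet, Pi.one_apply, one_mul, sq, mul_assoc]
  ring

lemma dirichlet_eq_dirichlet_killed_add (hP : P ∈ rowStochastic ℝ X) (hsymm : P.IsSymm)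
    (hf : ∀ x ∉ G, f x = 0) :
    dirichlet 1 P f = dirichlet 1 (killed P G) f + ∑ x, killRate (killed P G) x * f x ^ 2 := by
  have hrate : ∑ x, killRate P x * f x ^ 2 = 0 := sum_eq_zero fun x _ ↦ by
    rw [killRate, sum_row_of_mem_rowStochastic hP, sub_self, zero_mul]
  have hkilled (x : X) (hx : x ∈ G) : (f ᵥ* P) x = (f ᵥ* killed P G) x :=
    sum_congr rfl fun y _ ↦ by
      by_cases hy : y ∈ G
      · exact congrArg _ (if_pos ⟨hy, hx⟩).symm
      · rw [hf y hy, zero_mul, zero_mul]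
  rw [dirichlet_one_add_sum_killRate (killed_isSymm hsymm), ← add_zero (dirichlet 1 P f), ← hrate,
    dirichlet_one_add_sum_killRate hsymm]
  refine congrArg _ (sum_congr rfl fun x _ ↦ ?_)
  by_cases hx : x ∈ G
  · rw [Matrix.vecMul_sub, Matrix.vecMul_sub, Pi.sub_apply, Pi.sub_apply, hkilled x hx]
  · rw [hf x hx, mul_zero, mul_zero]

lemma killRate_killed (hP : P ∈ rowStochastic ℝ X) (hΩ : ∀ x ∈ Ω, ∀ y, P x y ≠ 0 → y ∈ Ω)
    (hGΩ : G ⊆ Ω) {x : X} (hx : x ∈ G) : killRate (killed P G) x = ∑ y ∈ Ω \ G, P x y := by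
  have hstay : ∑ y, killed P G x y = ∑ y ∈ G, P x y := by simp [killed, hx]
  have htotal : ∑ y ∈ Ω, P x y = 1 := by
    rw [← sum_row_of_mem_rowStochastic hP x]
    exact sum_subset (subset_univ Ω) fun y _ hy ↦ of_not_not (mt (hΩ x (hGΩ hx) y) hy)
  rw [killRate, hstay, ← htotal, ← sum_sdiff hGΩ, add_sub_cancel_right]

lemma sum_killRate_killed_le (hP : P ∈ rowStochastic ℝ X) (hsymm : P.IsSymm)
    (hΩ : ∀ x ∈ Ω, ∀ y, P x y ≠ 0 → y ∈ Ω) (hGΩ : G ⊆ Ω) :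
    ∑ x ∈ G, killRate (killed P G) x ≤ Ω.card - G.card := by
  calc ∑ x ∈ G, killRate (killed P G) x = ∑ y ∈ Ω \ G, ∑ x ∈ G, P y x := by
        rw [sum_congr rfl fun x hx ↦ killRate_killed hP hΩ hGΩ hx]
        refine sum_comm.trans ?_
        exact sum_congr rfl fun y _ ↦ sum_congr rfl fun x _ ↦ hsymm.apply y x
    _ ≤ ∑ y ∈ Ω \ G, 1 := sum_le_sum fun y _ ↦
        (sum_le_univ_sum_of_nonneg (hP.1 y)).trans_eq (sum_row_of_mem_rowStochastic hP y)
    _ = Ω.card - G.card := by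
        rw [sum_const, nsmul_one, card_sdiff_of_subset hGΩ, Nat.cast_sub (card_le_card hGΩ)]

lemma sum_vecMul_sub_one_mul_log_sub_le {q : ℝ} (hQ : IsSubstochastic Q) (hsymm : Q.IsSymm)
    (hk : 0 ≤ k) (hsupp : ∀ x ∉ G, k x = 0) (h0 : ∀ x, k x = 0 → ∀ y, k y * Q y x = 0)
    (hq : 0 < q) :
    ∑ x, (k ᵥ* (Q - 1)) x * Real.log (k x) - (∑ x, (k ᵥ* (Q - 1)) x) * Real.log q ≤
      -(dirichlet 1 Q (fun x ↦ √(k x)) + ∑ x, killRate Q x * k x) +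
        q * ∑ x ∈ G, killRate Q x := by
  have hkill : ∑ x, killRate Q x * (k x * (1 - (Real.log (k x) - Real.log q))) ≤
      ∑ x ∈ G, killRate Q x * q := by
    rw [← sum_subset (subset_univ G) fun x _ hx ↦ by rw [hsupp x hx, zero_mul, mul_zero]]
    exact sum_le_sum fun x _ ↦ mul_le_mul_of_nonneg_left
      (mul_one_sub_log_sub_log_le (hk x) hq) (hQ.killRate_nonneg x)
  rw [← sum_mul] at hkill
  simp only [mul_sub, mul_one, sum_sub_distrib, ← mul_assoc, ← sum_mul] at hkill
  rw [sum_vecMul_sub_one_mul hsymm, sum_vecMul_sub_one]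
  linarith [dirichlet_sqrt_le hsymm hQ.nonneg hk h0]

lemma uniformRelEntropyDeriv_killed_le (hP : P ∈ rowStochastic ℝ X) (hsymm : P.IsSymm)
    (hΩ : ∀ x ∈ Ω, ∀ y, P x y ≠ 0 → y ∈ Ω) (hGΩ : G ⊆ Ω) (hG : G.Nonempty) (hk : 0 ≤ k)
    (hk1 : ∑ x, k x ≤ 1) (hsupp : ∀ x ∉ G, k x = 0)
    (h0 : ∀ x, k x = 0 → ∀ y, k y * killed P G y x = 0) :
    uniformRelEntropyDeriv G k (k ᵥ* (killed P G - 1)) ≤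
      -dirichlet 1 P (fun x ↦ √(k x)) + (Ω.card - G.card) / G.card := by
  have hG0 : (0 : ℝ) < G.card := by exact_mod_cast hG.card_pos
  have hcard : (G.card : ℝ) ≤ Ω.card := by exact_mod_cast card_le_card hGΩ
  rcases (sum_nonneg fun x _ ↦ hk x : 0 ≤ ∑ x, k x).eq_or_lt with hm | hm
  · have hk0 : k = 0 := funext fun x ↦
      (sum_eq_zero_iff_of_nonneg fun x _ ↦ hk x).1 hm.symm x (mem_univ x)
    simpa [hk0, dirichlet, uniformRelEntropyDeriv] using div_nonneg (sub_nonneg.2 hcard) hG0.le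
  have hsqrt : ∀ x ∉ G, √(k x) = 0 := fun x hx ↦ by rw [hsupp x hx, Real.sqrt_zero]
  have hkill : (∑ x, k x) / G.card * ∑ x ∈ G, killRate (killed P G) x ≤
      (Ω.card - G.card) / G.card := by
    rw [div_mul_eq_mul_div]
    gcongr
    exact (mul_le_of_le_one_left (sum_nonneg fun x _ ↦
      (killed_isSubstochastic hP).killRate_nonneg x) hk1).trans
      (sum_killRate_killed_le hP hsymm hΩ hGΩ)
  rw [uniformRelEntropyDeriv, ← Real.log_div hm.ne' hG0.ne',
    dirichlet_eq_dirichlet_killed_add hP hsymm hsqrt]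
  simp only [Real.sq_sqrt (hk _)]
  exact (sum_vecMul_sub_one_mul_log_sub_le (killed_isSubstochastic hP) (killed_isSymm hsymm) hk
    hsupp h0 (div_pos hm hG0)).trans (by gcongr)

end Dissipation

section EntropyDecay

lemma le_exp_mul_add_of_hasDerivAt {H H' : ℝ → ℝ} {A c t : ℝ} (hA : 0 < A)
    (hcont : ContinuousOn H (Set.Ici 0)) (hderiv : ∀ s, 0 < s → HasDerivAt H (H' s) s)
    (hle : ∀ s, 0 < s → H' s ≤ c - H s / A) (ht : 0 ≤ t) :
    H t ≤ Real.exp (-t / A) * (H 0 - A * c) + A * c := by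
  have hanti : AntitoneOn (fun s ↦ Real.exp (s / A) * (H s - A * c)) (Set.Ici 0) := by
    refine antitoneOn_of_hasDerivWithinAt_nonpos (convex_Ici 0) (by fun_prop)
      (f' := fun s ↦ Real.exp (s / A) * (H s / A - c + H' s)) (fun s hs ↦ ?_) fun s hs ↦ ?_
    all_goals rw [interior_Ici, Set.mem_Ioi] at hs
    · refine ((((hasDerivAt_id s).div_const A).exp.mul
        ((hderiv s hs).sub_const (A * c))).congr_deriv ?_).hasDerivWithinAt
      simp only [id_eq]
      field_simp
    · exact mul_nonpos_of_nonneg_of_nonpos (Real.exp_nonneg _) (by linarith [hle s hs])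
  have h := mul_le_mul_of_nonneg_left (hanti Set.self_mem_Ici ht ht) (Real.exp_nonneg (-t / A))
  simp only [zero_div, Real.exp_zero, one_mul, ← mul_assoc, ← Real.exp_add, neg_div,
    neg_add_cancel] at h ⊢
  linarith

variable {X : Type*} [Fintype X] [DecidableEq X] {P : Matrix X X ℝ} {Ω G : Finset X}
  {μ ν : X → ℝ} {A t : ℝ}

lemma hasDerivAt_uniformRelEntropy_vecMul_heat {Q : Matrix X X ℝ} (hν : 0 ≤ ν)
    (hQ : ∀ x y, 0 ≤ Q x y) (ht : 0 < t) :
    HasDerivAt (fun s ↦ uniformRelEntropy G (ν ᵥ* heat Q s))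
      (uniformRelEntropyDeriv G (ν ᵥ* heat Q t) ((ν ᵥ* heat Q t) ᵥ* (Q - 1))) t :=
  hasDerivAt_uniformRelEntropy (vecMul_heat_nonneg hν hQ ht.le) (hasDerivAt_vecMul_heat ν Q t)
    fun _ hx ↦ .of_forall (vecMul_heat_apply_eq_zero_of_pos hν hQ ht hx)

lemma LocalLogSobolev.uniformRelEntropy_vecMul_heat_killed_le (hls : LocalLogSobolev P G A)
    (hA : 0 < A) (hP : P ∈ rowStochastic ℝ X) (hsymm : P.IsSymm)
    (hΩ : ∀ x ∈ Ω, ∀ y, P x y ≠ 0 → y ∈ Ω) (hGΩ : G ⊆ Ω) (hG : G.Nonempty) (hν : 0 ≤ ν)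
    (hν1 : ∑ x, ν x ≤ 1) (hsupp : ∀ x ∉ G, ν x = 0) (ht : 0 ≤ t) :
    uniformRelEntropy G (ν ᵥ* heat (killed P G) t) ≤
      Real.exp (-t / A) * Real.log Ω.card + A * ((Ω.card - G.card) / G.card) := by
  have hQ : IsSubstochastic (killed P G) := killed_isSubstochastic hP
  have hG1 : (1 : ℝ) ≤ G.card := by exact_mod_cast hG.card_pos
  have hcard : (G.card : ℝ) ≤ Ω.card := by exact_mod_cast card_le_card hGΩ
  have hcont : Continuous fun s ↦ uniformRelEntropy G (ν ᵥ* heat (killed P G) s) :=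
    (continuous_uniformRelEntropy G).comp <| continuous_iff_continuousAt.2 fun s ↦
      (hasDerivAt_vecMul_heat ν _ s).continuousAt
  have hinit : uniformRelEntropy G (ν ᵥ* heat (killed P G) 0) ≤ Real.log Ω.card := by
    rw [heat_zero, Matrix.vecMul_one]
    calc uniformRelEntropy G ν ≤ (∑ x, ν x) * Real.log G.card :=
          uniformRelEntropy_le_mul_log_card hν
      _ ≤ Real.log G.card := mul_le_of_le_one_left (Real.log_nonneg hG1) hν1
      _ ≤ Real.log Ω.card := Real.log_le_log (one_pos.trans_le hG1) hcard
  have hgronwall := le_exp_mul_add_of_hasDerivAt (c := (Ω.card - G.card) / G.card) hA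
    hcont.continuousOn
    (fun s hs ↦ hasDerivAt_uniformRelEntropy_vecMul_heat hν hQ.nonneg hs) (fun s hs ↦ ?_) ht
  · have hc : 0 ≤ A * ((Ω.card - G.card) / G.card) :=
      mul_nonneg hA.le (div_nonneg (sub_nonneg.2 hcard) (by positivity))
    refine hgronwall.trans ?_
    gcongr
    linarith
  · have hk := vecMul_heat_nonneg hν hQ.nonneg hs.le
    have hksupp : ∀ x ∉ G, (ν ᵥ* heat (killed P G) s) x = 0 := fun x ↦
      vecMul_heat_killed_apply_of_notMem hsupp s
    have hlsi := (div_le_iff₀' hA).2 (hls.uniformRelEntropy_le_dirichlet hG hk hksupp)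
    have hprod := uniformRelEntropyDeriv_killed_le hP hsymm hΩ hGΩ hG hk
      ((hQ.sum_vecMul_heat_le hν hs.le).trans hν1) hksupp
      fun x hx y ↦ vecMul_heat_mul_eq_zero_of_pos hν hQ.nonneg hs hx y
    linarith

lemma LocalLogSobolev.tvDist_vecMul_heat_le (hls : LocalLogSobolev P G A)
    (hA : 0 < A) (hP : P ∈ rowStochastic ℝ X) (hsymm : P.IsSymm)
    (hΩ : ∀ x ∈ Ω, ∀ y, P x y ≠ 0 → y ∈ Ω) (hGΩ : G ⊆ Ω) (hG : G.Nonempty) (hμ : 0 ≤ μ)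
    (hμ1 : ∑ x, μ x = 1) (ht : 0 ≤ t) {L : ℕ} (hL : 1 ≤ L) {η : ℝ}
    (hη : 1 - ∑ z, (μ ᵥ* killed P G ^ L) z ≤ η) :
    tvDist (μ ᵥ* heat P t) (unifOn Ω) ≤ η + poissonProb t (L < ·) +
      √((Real.exp (-t / A) * Real.log Ω.card + A * ((Ω.card - G.card) / G.card)) / 2) +
      (Ω.card - G.card) / Ω.card := by
  set R := Real.exp (-t / A) * Real.log Ω.card + A * ((Ω.card - G.card) / G.card)
  set ν := (G : Set X).indicator μ
  set k := ν ᵥ* heat (killed P G) t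
  have hQ : IsSubstochastic (killed P G) := killed_isSubstochastic hP
  have hν : 0 ≤ ν := Set.indicator_nonneg fun x _ ↦ hμ x
  have hνμ : ν ≤ μ := Set.indicator_le_self' fun x _ ↦ hμ x
  have hν1 : ∑ x, ν x ≤ 1 := (sum_le_sum fun x _ ↦ hνμ x).trans_eq hμ1
  have hsupp : ∀ x ∉ G, ν x = 0 := fun x hx ↦ Set.indicator_of_notMem (mem_coe.not.2 hx) μ
  have hk : 0 ≤ k := vecMul_heat_nonneg hν hQ.nonneg ht
  have hm1 : ∑ x, k x ≤ 1 := (hQ.sum_vecMul_heat_le hν ht).trans hν1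
  have hloss : 1 - ∑ x, k x ≤ η + poissonProb t (L < ·) :=
    hQ.one_sub_sum_vecMul_heat_le hν hν1 ht (by rwa [indicator_vecMul_killed_pow μ hL])
  have hkill : tvDist (μ ᵥ* heat P t) k = (1 - ∑ x, k x) / 2 := by
    rw [tvDist_eq_of_le (vecMul_heat_le_vecMul_heat hν hνμ hQ.nonneg (killed_le hP.1) ht),
      sum_vecMul_heat_of_mem_rowStochastic hP, hμ1]
  have hentropy : uniformRelEntropy G k ≤ R :=
    hls.uniformRelEntropy_vecMul_heat_killed_le hA hP hsymm hΩ hGΩ hG hν hν1 hsupp ht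
  have hR0 : 0 ≤ R := by
    have hcard : (G.card : ℝ) ≤ Ω.card := by exact_mod_cast card_le_card hGΩ
    have := sub_nonneg.2 hcard
    positivity
  have hpinsker : tvDist k ((∑ x, k x) • unifOn G) ≤ √(R / 2) := by
    refine (tvDist_smul_unifOn_sum_le_sqrt hG hk fun x ↦
      vecMul_heat_killed_apply_of_notMem hsupp t).trans ?_
    gcongr
    exact (mul_le_mul_of_nonneg_left hentropy (sum_nonneg fun x _ ↦ hk x)).trans
      (mul_le_of_le_one_left hR0 hm1)
  linarith [tvDist_triangle (μ ᵥ* heat P t) k (unifOn Ω),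
    tvDist_triangle k ((∑ x, k x) • unifOn G) (unifOn Ω),
    tvDist_triangle ((∑ x, k x) • unifOn G) (unifOn G) (unifOn Ω),
    tvDist_smul_unifOn hG hm1, tvDist_unifOn_of_subset hG hGΩ]

end EntropyDecay

section Mixing

variable {X : Type*} [Fintype X] [DecidableEq X] {P : Matrix X X ℝ}

lemma hasSum_burnThenHeat_zero_add (P : Matrix X X ℝ) (u t : ℝ) (x : X) :
    HasSum (fun i ↦ poissonWeight u i • burnThenHeat P i t x) (burnThenHeat P 0 (u + t) x) := by
  have h := (heat P t).vecMulLinear.toContinuousLinearMap.hasSum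
    (hasSum_vecMul_heat ((1 : Matrix X X ℝ) x) P u)
  rw [burnThenHeat_eq_vecMul_heat, heat_add, ← Matrix.vecMul_vecMul, pow_zero]
  refine h.congr_fun fun i ↦ ?_
  rw [map_smul, burnThenHeat_eq_vecMul_heat, ← one_mul (P ^ i), Matrix.mul_apply_eq_vecMul]
  simp

lemma tvDist_burnThenHeat_zero_add_le (hP : P ∈ rowStochastic ℝ X) {g : X → ℝ} (hg : 0 ≤ g)
    (hg1 : ∑ x, g x = 1) {u t b c : ℝ} (hu : 0 ≤ u) (ht : 0 ≤ t) {x : X}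
    (hb : ∀ i : ℕ, c ≤ i → tvDist (burnThenHeat P i t x) g ≤ b) :
    tvDist (burnThenHeat P 0 (u + t) x) g ≤ b + poissonProb u fun i ↦ (i : ℝ) < c := by
  have hle1 (i : ℕ) : tvDist (burnThenHeat P i t x) g ≤ 1 := by
    have hPi : P ^ i ∈ rowStochastic ℝ X := pow_mem hP i
    rw [burnThenHeat_eq_vecMul_heat]
    refine tvDist_le_one (vecMul_heat_nonneg (hPi.1 x) hP.1 ht) hg ?_ hg1
    rw [sum_vecMul_heat_of_mem_rowStochastic hP, sum_row_of_mem_rowStochastic hPi]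
  have hb0 : 0 ≤ b := (tvDist_nonneg _ _).trans (hb ⌈c⌉₊ (Nat.le_ceil c))
  have hsummable : Summable fun i ↦ poissonWeight u i * tvDist (burnThenHeat P i t x) g :=
    (hasSum_poissonWeight u).summable.of_nonneg_of_le
      (fun i ↦ mul_nonneg (poissonWeight_nonneg hu i) (tvDist_nonneg _ _))
      fun i ↦ mul_le_of_le_one_right (poissonWeight_nonneg hu i) (hle1 i)
  refine (tvDist_le_of_hasSum (poissonWeight_nonneg hu) (hasSum_poissonWeight u)
    (hasSum_burnThenHeat_zero_add P u t x) hsummable.hasSum).trans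
    (le_add_poissonProb_of_hasSum hu (fun i ↦ ?_) hsummable.hasSum)
  split_ifs with hi
  · linarith [hle1 i]
  · linarith [hb i (not_lt.1 hi)]

end Mixing

lemma mem_rowStochastic_of_coordinateReplacement {ι S : Type*} [Fintype ι] [DecidableEq ι]
    [Nonempty ι] [Fintype S] [DecidableEq S] {K : ι → (ι → S) → Matrix S S ℝ}
    {P : Matrix (ι → S) (ι → S) ℝ} (hK : ∀ i x, K i x ∈ rowStochastic ℝ S)
    (hP : ∀ x y, P x y = 1 / (Fintype.card ι : ℝ) *
      ∑ i, ∑ u, if y = Function.update x i u then K i x (x i) u else 0) :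
    P ∈ rowStochastic ℝ (ι → S) := by
  refine mem_rowStochastic_iff_sum.2 ⟨fun x y ↦ ?_, fun x ↦ ?_⟩
  · rw [hP]
    refine mul_nonneg (by positivity) (sum_nonneg fun i _ ↦ sum_nonneg fun u _ ↦ ?_)
    split_ifs
    exacts [(hK i x).1 _ _, le_rfl]
  · have hcoord (i : ι) :
        ∑ y, ∑ u, (if y = Function.update x i u then K i x (x i) u else 0) = 1 := by
      rw [sum_comm]
      simpa using sum_row_of_mem_rowStochastic (hK i x) (x i)
    simp only [hP, ← mul_sum]
    rw [sum_comm]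
    simp [hcoord]

theorem stmt7_general {X : Type*} [Fintype X] [DecidableEq X] {P : Matrix X X ℝ}
    {Ω G : Finset X} {A t tstar η : ℝ} {L : ℕ} (hP : P ∈ rowStochastic ℝ X) (hsymm : P.IsSymm)
    (hΩ : ∀ x ∈ Ω, ∀ y, P x y ≠ 0 → y ∈ Ω) (hG : G.Nonempty) (hGΩ : G ⊆ Ω) (hA : 0 < A)
    (hls : LocalLogSobolev P G A) (ht : 0 ≤ t) (hL : 1 ≤ L)
    (hsojourn : ∀ x ∈ Ω, ∀ s : ℕ, tstar ≤ s → 1 - ∑ z, (P ^ s * killed P G ^ L) x z ≤ η) :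
    let πGc : ℝ := (Ω.card - G.card) / Ω.card
    let R : ℝ := Real.exp (-t / A) * Real.log Ω.card + A * (πGc / (G.card / Ω.card))
    let B : ℝ := η + poissonProb t (L < ·) + √(R / 2) + πGc
    (∀ x ∈ Ω, ∀ s : ℕ, tstar ≤ s → tvDist (burnThenHeat P s t x) (unifOn Ω) ≤ B) ∧
      ∀ u ε : ℝ, 0 ≤ u → B + (poissonProb u fun j ↦ (j : ℝ) < tstar) ≤ ε →
        sInf {t : ℝ | 0 ≤ t ∧ ∀ x ∈ Ω, tvDist (burnThenHeat P 0 t x) (unifOn Ω) ≤ ε} ≤ u + t := by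
  intro πGc R B
  have hΩ0 : (Ω.card : ℝ) ≠ 0 := by exact_mod_cast (hG.mono hGΩ).card_ne_zero
  have hR : R = Real.exp (-t / A) * Real.log Ω.card + A * ((Ω.card - G.card) / G.card) := by
    simp only [R, πGc, div_div_div_cancel_right₀ hΩ0]
  have htv : ∀ x ∈ Ω, ∀ s : ℕ, tstar ≤ s → tvDist (burnThenHeat P s t x) (unifOn Ω) ≤ B := by
    intro x hx s hs
    have hPs : P ^ s ∈ rowStochastic ℝ X := pow_mem hP s
    rw [burnThenHeat_eq_vecMul_heat]
    simp only [B, hR]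
    exact hls.tvDist_vecMul_heat_le hA hP hsymm hΩ hGΩ hG (hPs.1 x)
      (sum_row_of_mem_rowStochastic hPs x) ht hL (hsojourn x hx s hs)
  refine ⟨htv, fun u ε hu hε ↦ csInf_le ⟨0, fun r hr ↦ hr.1⟩ ⟨by positivity, fun x hx ↦ ?_⟩⟩
  exact (tvDist_burnThenHeat_zero_add_le hP (unifOn_nonneg Ω) (sum_unifOn (hG.mono hGΩ)) hu ht
    (htv x hx)).trans hε

theorem stmt7 :
    ∀ (S : Type) [Fintype S] [DecidableEq S] [Nonempty S] (N : ℕ), 1 ≤ N →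
    ∀ (K : Fin N → (Fin N → S) → Matrix S S ℝ) (P : Matrix (Fin N → S) (Fin N → S) ℝ)
      (Ω G : Finset (Fin N → S)) (A tstar η : ℝ) (L : ℕ),
      -- coordinate-replacement structure of P
      (∀ i x u v, 0 ≤ K i x u v) →
      (∀ i x u, (∑ v, K i x u v) = 1) →
      (∀ i x u v, K i x u v = K i x v u) →
      (∀ i (x y : Fin N → S), (∀ j, j ≠ i → x j = y j) → K i x = K i y) →
      (∀ x y, P x y =
        (1 / (N : ℝ)) * ∑ i, ∑ u, (if y = Function.update x i u then K i x (x i) u else 0)) →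
      (∀ x y, P x y = P y x) →
      -- Ω is P-invariant with μ(Ω) > 0, and G ⊆ Ω with π(G) > 0
      (∀ x ∈ Ω, ∀ y, P x y ≠ 0 → y ∈ Ω) →
      Ω.Nonempty → G.Nonempty → G ⊆ Ω →
      0 < A →
      -- (i) local log-Sobolev inequality on G
      (∀ F : (Fin N → S) → ℝ, (∀ x, 0 ≤ F x) → (∀ x, F x ≠ 0 → x ∈ G) →
        ent (unif (Fin N → S)) (fun x => (F x) ^ 2) ≤ A * dirichlet (unif (Fin N → S)) P F) →
      0 ≤ tstar → 1 ≤ L → 0 ≤ η →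
      -- (ii) burn-in/sojourn estimate: after any burn-in s ≥ t_*, the chain stays in G
      -- for L more steps except with probability η
      (∀ x ∈ Ω, ∀ s : ℕ, tstar ≤ (s : ℝ) →
        1 - (∑ z, ((P ^ s) * (killed P G) ^ L) x z) ≤ η) →
      -- definitions of π, t_conf, ζ and R
      (let π : (Fin N → S) → ℝ := fun x => if x ∈ Ω then (Ω.card : ℝ)⁻¹ else 0;
       let tconf : ℝ := 2 * A * Real.log (Real.exp 1 + Real.log (Ω.card));
       let ζ : ℝ :=
         ∑' j : ℕ, if L < j then Real.exp (-tconf) * tconf ^ j / (Nat.factorial j) else 0;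
       let πGc : ℝ := ((Ω.card : ℝ) - (G.card : ℝ)) / (Ω.card : ℝ);
       let R : ℝ := Real.exp (-tconf / A) * Real.log (Ω.card) +
         A * (πGc / ((G.card : ℝ) / (Ω.card : ℝ)));
       -- conclusion 1: total-variation bound after burn-in plus confinement time
       (∀ x ∈ Ω, ∀ s : ℕ, tstar ≤ (s : ℝ) →
          tvDist (burnThenHeat P s tconf x) π ≤
            2 * (η + ζ) + Real.sqrt (R / 2) + πGc) ∧
       -- conclusion 2: continuous-time mixing-time bound
       (2 * (η + ζ) + Real.sqrt (R / 2) + πGc +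
          (∑' j : ℕ, if (j : ℝ) < tstar then
            Real.exp (-(2 * tstar)) * (2 * tstar) ^ j / (Nat.factorial j) else 0) ≤ 1 / 4 →
        sInf {t : ℝ | 0 ≤ t ∧ ∀ x ∈ Ω, tvDist (burnThenHeat P 0 t x) π ≤ 1 / 4} ≤
          2 * tstar + tconf)) := by
  intro S _ _ _ N hN K P Ω G A tstar η L hK0 hK1 _ _ hP hsymm hΩ _ hG hGΩ hA hls htstar hL hη
    hsojourn π tconf ζ πGc R
  have : NeZero N := ⟨by omega⟩
  have hstoch : P ∈ rowStochastic ℝ (Fin N → S) :=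
    mem_rowStochastic_of_coordinateReplacement
      (fun i x ↦ mem_rowStochastic_iff_sum.2 ⟨hK0 i x, hK1 i x⟩)
      (by simpa only [Fintype.card_fin] using hP)
  have htconf : 0 ≤ tconf := by
    have hexp : 1 ≤ Real.exp 1 := Real.one_le_exp zero_le_one
    exact mul_nonneg (by positivity)
      (Real.log_nonneg (le_add_of_le_of_nonneg hexp (Real.log_natCast_nonneg _)))
  have hζ : 0 ≤ ζ := poissonProb_nonneg htconf
  obtain ⟨htv, hmix⟩ := stmt7_general hstoch (Matrix.IsSymm.ext fun x y ↦ hsymm y x) hΩ hG hGΩ hA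
    hls htconf hL hsojourn
  have hdouble : η + ζ + √(R / 2) + πGc ≤ 2 * (η + ζ) + √(R / 2) + πGc := by linarith
  exact ⟨fun x hx s hs ↦ (htv x hx s hs).trans hdouble, fun hle ↦
    hmix (2 * tstar) (1 / 4) (by positivity) ((add_le_add_left hdouble _).trans hle)⟩
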